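/- Let N ≥ 1, p, q ≥ 0, r₁, r₂ ∈ [1,∞), and set P = N(p/r₂ − 1/r₁), Q = N(q/r₁ − 1/r₂). Assume 0 < max{P,Q} ≤ 2 and let 1 < r ≤ min{r₁,r₂}. Then there exists σ* > 1 such that for every σ ∈ (1, σ*] there exist positive constants γ₁, T₁ and C (independent of the data) with the following property: for all nonnegative measurable u₀, v₀ on ℝ^N with |||u₀|||_{r₁,1} < ∞ and |||v₀|||_{r₂,1} < ∞, setting W₀ = u₀^{r₁} + v₀^{r₂}, if |||W₀|||_{1,ρ} ≤ γ₁ ρ^{N(1 − 2/max{P,Q})} for some ρ > 0, then the system (S) possesses a solution (u,v) on ℝ^N × (0, min{ρ², T₁}] satisfying 0 ≤ u(x,t)^{r₁} + v(x,t)^{r₂} ≤ C [S(t)W₀^{σ/r}](x)^{r/σ} + C for a.e. x ∈ ℝ^N and all t ∈ (0, min{ρ², T₁}]. -/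

import Mathlib

open MeasureTheory ENNReal Filter

noncomputable section

/-- Euclidean space `ℝ^N`. -/
abbrev Euc (N : ℕ) := EuclideanSpace ℝ (Fin N)

/-- The heat semigroup applied to a (nonnegative) function `φ` on `ℝ^N`, with values in `[0,∞]`:
`[S(t)φ](x) = ∫ (4πt)^{-N/2} exp(-|x-y|²/(4t)) φ(y) dy`. -/
noncomputable def heatS (N : ℕ) (t : ℝ) (φ : Euc N → ℝ) (x : Euc N) : ℝ≥0∞ :=
  ∫⁻ y, ENNReal.ofReal
    ((4 * Real.pi * t) ^ (-(N : ℝ) / 2) * Real.exp (-‖x - y‖ ^ 2 / (4 * t)) * φ y)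

/-- The `L^∞` norm of `S(t)φ` on `ℝ^N`. -/
noncomputable def heatSup (N : ℕ) (t : ℝ) (φ : Euc N → ℝ) : ℝ≥0∞ :=
  essSup (heatS N t φ) volume

/-- The `L^{r,∞}(E)` quasinorm: for `1 < r < ∞` it is
`sup_{λ>0} λ |{x ∈ E : |f x| > λ}|^{1/r}`; for `r = 1` (resp. `r = ∞`)
it is the usual `L¹(E)` (resp. `L^∞(E)`) norm. -/
noncomputable def wnorm (N : ℕ) (r : ℝ≥0∞) (f : Euc N → ℝ) (E : Set (Euc N)) : ℝ≥0∞ :=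
  if r = 1 then ∫⁻ x in E, ENNReal.ofReal |f x|
  else if r = ⊤ then essSup (fun x => ENNReal.ofReal |f x|) (volume.restrict E)
  else ⨆ (l : ℝ) (_ : 0 < l), ENNReal.ofReal l * (volume {x ∈ E | l < |f x|}) ^ (1 / r.toReal)

/-- The uniformly local quasinorm `|||f|||_{r,ρ} = sup_x ‖f‖_{L^{r,∞}(B(x,ρ))}`
(for `r = ∞` it is the `L^∞(ℝ^N)` norm). -/
noncomputable def ulocNorm (N : ℕ) (r : ℝ≥0∞) (ρ : ℝ) (f : Euc N → ℝ) : ℝ≥0∞ :=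
  if r = ⊤ then essSup (fun x => ENNReal.ofReal |f x|) volume
  else ⨆ x : Euc N, wnorm N r f (Metric.ball x ρ)

/-- `u ∈ L^∞(τ, T-τ; L^∞(ℝ^N))` for every `τ ∈ (0, T/2)`. -/
def LocBdd (N : ℕ) (T : ℝ≥0∞) (u : Euc N → ℝ → ℝ) : Prop :=
  ∀ τ : ℝ, 0 < τ → ENNReal.ofReal (2 * τ) < T →
    ∃ M : ℝ, ∀ t : ℝ, τ ≤ t → ENNReal.ofReal (t + τ) ≤ T →
      ∀ᵐ x ∂(volume : Measure (Euc N)), |u x t| ≤ M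

/-- Regularity requirements on a pair `(u,v)`: nonnegativity, joint measurability and
uniform boundedness away from `t = 0` and `t = T`. -/
def PairRegular (N : ℕ) (T : ℝ≥0∞) (u v : Euc N → ℝ → ℝ) : Prop :=
  (∀ x t, 0 ≤ u x t) ∧ (∀ x t, 0 ≤ v x t) ∧
  Measurable (Function.uncurry u) ∧ Measurable (Function.uncurry v) ∧
  LocBdd N T u ∧ LocBdd N T v

/-- The Duhamel identities for the system (S) `∂ₜu = Δu + v^p`, `∂ₜv = Δv + u^q` at time `t`. -/
def DuhamelSys (N : ℕ) (p q : ℝ) (u₀ v₀ : Euc N → ℝ) (u v : Euc N → ℝ → ℝ) (t : ℝ) : Prop :=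
  (∀ᵐ x ∂(volume : Measure (Euc N)), ENNReal.ofReal (u x t) =
      heatS N t u₀ x + ∫⁻ s in Set.Ioo 0 t, heatS N (t - s) (fun y => v y s ^ p) x) ∧
  (∀ᵐ x ∂(volume : Measure (Euc N)), ENNReal.ofReal (v x t) =
      heatS N t v₀ x + ∫⁻ s in Set.Ioo 0 t, heatS N (t - s) (fun y => u y s ^ q) x)

/-- The Duhamel inequalities (`≥`, with finite left-hand side) for the system (S) at time `t`. -/
def DuhamelSuperSys (N : ℕ) (p q : ℝ) (u₀ v₀ : Euc N → ℝ) (u v : Euc N → ℝ → ℝ) (t : ℝ) : Prop :=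
  (∀ᵐ x ∂(volume : Measure (Euc N)),
      heatS N t u₀ x + (∫⁻ s in Set.Ioo 0 t, heatS N (t - s) (fun y => v y s ^ p) x) ≤
        ENNReal.ofReal (u x t)) ∧
  (∀ᵐ x ∂(volume : Measure (Euc N)),
      heatS N t v₀ x + (∫⁻ s in Set.Ioo 0 t, heatS N (t - s) (fun y => u y s ^ q) x) ≤
        ENNReal.ofReal (v x t))

/-- `(u,v)` is a solution of the system (S) on `ℝ^N × (0,T)`. -/
def IsSolSys (N : ℕ) (p q : ℝ) (u₀ v₀ : Euc N → ℝ) (T : ℝ≥0∞) (u v : Euc N → ℝ → ℝ) : Prop :=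
  PairRegular N T u v ∧
  ∀ t : ℝ, 0 < t → ENNReal.ofReal t < T → DuhamelSys N p q u₀ v₀ u v t

/-- `(u,v)` is a supersolution of the system (S) on `ℝ^N × (0,T)`. -/
def IsSuperSys (N : ℕ) (p q : ℝ) (u₀ v₀ : Euc N → ℝ) (T : ℝ≥0∞) (u v : Euc N → ℝ → ℝ) : Prop :=
  PairRegular N T u v ∧
  ∀ t : ℝ, 0 < t → ENNReal.ofReal t < T → DuhamelSuperSys N p q u₀ v₀ u v t

/-- `(u,v)` is the minimal solution of the system (S) on `ℝ^N × (0,T)`. -/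
def IsMinSolSys (N : ℕ) (p q : ℝ) (u₀ v₀ : Euc N → ℝ) (T : ℝ≥0∞)
    (u v : Euc N → ℝ → ℝ) : Prop :=
  IsSolSys N p q u₀ v₀ T u v ∧
  ∀ u' v' : Euc N → ℝ → ℝ, IsSolSys N p q u₀ v₀ T u' v' →
    ∀ t : ℝ, 0 < t → ENNReal.ofReal t < T →
      (∀ᵐ x ∂(volume : Measure (Euc N)), u x t ≤ u' x t) ∧
      (∀ᵐ x ∂(volume : Measure (Euc N)), v x t ≤ v' x t)

/-- Regularity requirements on a scalar function `w`. -/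
def ScalarRegular (N : ℕ) (T : ℝ≥0∞) (w : Euc N → ℝ → ℝ) : Prop :=
  (∀ x t, 0 ≤ w x t) ∧ Measurable (Function.uncurry w) ∧ LocBdd N T w

/-- The Duhamel identity for the scalar problem (E) `∂ₜw = Δw + α w^A + β w^B` at time `t`. -/
def DuhamelScalar (N : ℕ) (α β A B : ℝ) (w₀ : Euc N → ℝ) (w : Euc N → ℝ → ℝ) (t : ℝ) : Prop :=
  ∀ᵐ x ∂(volume : Measure (Euc N)), ENNReal.ofReal (w x t) =
    heatS N t w₀ x +
      ∫⁻ s in Set.Ioo 0 t, heatS N (t - s) (fun y => α * w y s ^ A + β * w y s ^ B) x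

/-- The Duhamel inequality (`≥`, with finite left-hand side) for the scalar problem (E). -/
def DuhamelSuperScalar (N : ℕ) (α β A B : ℝ) (w₀ : Euc N → ℝ) (w : Euc N → ℝ → ℝ)
    (t : ℝ) : Prop :=
  ∀ᵐ x ∂(volume : Measure (Euc N)),
    heatS N t w₀ x +
        (∫⁻ s in Set.Ioo 0 t, heatS N (t - s) (fun y => α * w y s ^ A + β * w y s ^ B) x) ≤
      ENNReal.ofReal (w x t)

/-- `w` is a solution of the scalar problem (E) on `ℝ^N × (0,T)`. -/
def IsSolScalar (N : ℕ) (α β A B : ℝ) (w₀ : Euc N → ℝ) (T : ℝ≥0∞)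
    (w : Euc N → ℝ → ℝ) : Prop :=
  ScalarRegular N T w ∧
  ∀ t : ℝ, 0 < t → ENNReal.ofReal t < T → DuhamelScalar N α β A B w₀ w t

/-- `w` is a supersolution of the scalar problem (E) on `ℝ^N × (0,T)`. -/
def IsSuperScalar (N : ℕ) (α β A B : ℝ) (w₀ : Euc N → ℝ) (T : ℝ≥0∞)
    (w : Euc N → ℝ → ℝ) : Prop :=
  ScalarRegular N T w ∧
  ∀ t : ℝ, 0 < t → ENNReal.ofReal t < T → DuhamelSuperScalar N α β A B w₀ w t

/-- The Duhamel identities for the strongly coupled system (SC)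
`∂ₜu = Δu + u^{p₁} v^{p₂}`, `∂ₜv = Δv + u^{q₁} v^{q₂}` at time `t`. -/
def DuhamelSC (N : ℕ) (p₁ p₂ q₁ q₂ : ℝ) (u₀ v₀ : Euc N → ℝ) (u v : Euc N → ℝ → ℝ)
    (t : ℝ) : Prop :=
  (∀ᵐ x ∂(volume : Measure (Euc N)), ENNReal.ofReal (u x t) =
      heatS N t u₀ x +
        ∫⁻ s in Set.Ioo 0 t, heatS N (t - s) (fun y => u y s ^ p₁ * v y s ^ p₂) x) ∧
  (∀ᵐ x ∂(volume : Measure (Euc N)), ENNReal.ofReal (v x t) =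
      heatS N t v₀ x +
        ∫⁻ s in Set.Ioo 0 t, heatS N (t - s) (fun y => u y s ^ q₁ * v y s ^ q₂) x)

/-- `(u,v)` is a solution of the strongly coupled system (SC) on `ℝ^N × (0,T)`. -/
def IsSolSC (N : ℕ) (p₁ p₂ q₁ q₂ : ℝ) (u₀ v₀ : Euc N → ℝ) (T : ℝ≥0∞)
    (u v : Euc N → ℝ → ℝ) : Prop :=
  PairRegular N T u v ∧
  ∀ t : ℝ, 0 < t → ENNReal.ofReal t < T → DuhamelSC N p₁ p₂ q₁ q₂ u₀ v₀ u v t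

/-! Put `θ = r / σ`, `κ = max P Q` and `F(t) = S(t) W₀^{1/θ}`. Jensen's inequality gives
`F^θ ≤ S(t) W₀`, and `S(t) W₀` is at most a constant times `t^{-N/2}` times the largest mass of
`W₀` on a ball of radius `√t`. Hence the smallness of `W₀` on balls of radius `ρ` turns into the
decay `F(t)^m ≤ ε / t` for `t ≤ ρ²`, where `m = θ κ / N`.

This decay makes the pair `(2 F^{θ/r₁} + 1, 2 F^{θ/r₂} + 1)` a supersolution for small times:
the source `v^p` is of order `1 + F^{θ p/r₂}` with `θ p/r₂ ≤ θ/r₁ + m` by the definition of `P`,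
and, by Jensen's inequality and the semigroup property, `∫₀ᵗ S(t-s) F(s)^{θ/r₁+m} ds` is at most
a constant times `ε F(t)^{θ/r₁}`; the other component is symmetric. Both uses of Jensen's
inequality are legitimate for `σ* = r`: then `θ ≥ 1`, while `θ/r₁, θ/r₂ < 1` because `σ > 1`. The
Picard iterates started at `0` increase and stay below the supersolution, so their limit is the
solution. -/

section Preliminaries

lemma ennreal_iSup_rpow {ι : Sort*} [Nonempty ι] {p : ℝ} (hp : 0 ≤ p) (g : ι → ℝ≥0∞) :
    (⨆ i, g i) ^ p = ⨆ i, g i ^ p := by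
  rcases hp.eq_or_lt with rfl | hp
  · simp
  · exact (ENNReal.orderIsoRpow p hp).map_iSup g

lemma two_mul_rpow_add_one_rpow_le {α p b : ℝ} (hα : 0 ≤ α) (hp : 0 ≤ p) (hb : α * p ≤ b)
    (X : ℝ≥0∞) : (2 * X ^ α + 1) ^ p ≤ 3 ^ p * (1 + X ^ b) := by
  rcases le_total X 1 with hX | hX
  · have hXα : X ^ α ≤ 1 := ENNReal.rpow_le_one hX hα
    calc (2 * X ^ α + 1) ^ p ≤ (2 * 1 + 1) ^ p := by gcongr
      _ = 3 ^ p * 1 := by norm_num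
      _ ≤ 3 ^ p * (1 + X ^ b) := by gcongr; exact le_self_add
  · have hXα : 1 ≤ X ^ α := by simpa using ENNReal.rpow_le_rpow hX hα
    calc (2 * X ^ α + 1) ^ p ≤ (2 * X ^ α + X ^ α) ^ p := by gcongr
      _ = (3 * X ^ α) ^ p := by congr 1; ring
      _ = 3 ^ p * X ^ (α * p) := by rw [ENNReal.mul_rpow_of_nonneg _ _ hp, ENNReal.rpow_mul]
      _ ≤ 3 ^ p * X ^ b := by gcongr
      _ ≤ 3 ^ p * (1 + X ^ b) := by gcongr; exact le_add_self

lemma div_mul_le_div_add_mul_div {n a b p κ θ : ℝ} (hn : 0 < n) (hθ : 0 ≤ θ)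
    (h : n * (p / b - 1 / a) ≤ κ) : θ / b * p ≤ θ / a + θ * κ / n := by
  calc θ / b * p = θ * (1 / a + (p / b - 1 / a)) := by ring
    _ ≤ θ * (1 / a + κ / n) := by gcongr; rwa [le_div_iff₀' hn]
    _ = θ / a + θ * κ / n := by ring

lemma rpow_neg_half_mul_rpow_le_inv_rpow {d κ t ρ : ℝ} (hd : 0 ≤ d) (hκ₀ : 0 < κ) (hκ₂ : κ ≤ 2)
    (ht : 0 < t) (htρ : √t ≤ ρ) :
    t ^ (-d / 2) * ρ ^ (d * (1 - 2 / κ)) ≤ t⁻¹ ^ (d / κ) := by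
  have hexponent : d * (1 - 2 / κ) ≤ 0 :=
    mul_nonpos_of_nonneg_of_nonpos hd (sub_nonpos.2 ((one_le_div hκ₀).2 hκ₂))
  calc t ^ (-d / 2) * ρ ^ (d * (1 - 2 / κ))
      ≤ t ^ (-d / 2) * √t ^ (d * (1 - 2 / κ)) :=
        mul_le_mul_of_nonneg_left
          (Real.rpow_le_rpow_of_nonpos (Real.sqrt_pos.2 ht) htρ hexponent) (by positivity)
    _ = t⁻¹ ^ (d / κ) := by
        rw [Real.sqrt_eq_rpow, ← Real.rpow_mul ht.le, ← Real.rpow_add ht, Real.inv_rpow ht.le,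
          ← Real.rpow_neg ht.le]
        congr 1
        field_simp
        ring

lemma ofReal_le_ofReal_rpow_inv_rpow_div {a w r θ : ℝ} (ha : 0 ≤ a) (hr : 0 < r) (hθ : θ ≠ 0)
    (h : a ^ r ≤ w) : ENNReal.ofReal a ≤ (ENNReal.ofReal w ^ θ⁻¹) ^ (θ / r) := by
  rw [← ENNReal.rpow_mul, inv_mul_eq_div, div_div_cancel_left' hθ, ENNReal.le_rpow_inv_iff hr,
    ENNReal.ofReal_rpow_of_nonneg ha hr.le]
  exact ENNReal.ofReal_le_ofReal h

lemma rpow_mul_div_rpow_mul_rpow_one_sub {μ : ℝ} (hμ₀ : 0 ≤ μ) (hμ₁ : μ ≤ 1) {τ : ℝ≥0∞}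
    (hτ₀ : τ ≠ 0) (hτ : τ ≠ ⊤) (K : ℝ≥0∞) : τ ^ μ * (K / τ) ^ μ * K ^ (1 - μ) = K := by
  rw [← ENNReal.mul_rpow_of_nonneg _ _ hμ₀, ENNReal.mul_div_cancel hτ₀ hτ,
    ← ENNReal.rpow_add_of_nonneg _ _ hμ₀ (sub_nonneg.2 hμ₁), add_sub_cancel, ENNReal.rpow_one]

lemma lintegral_Ioo_rpow_neg {t a : ℝ} (ht : 0 < t) (ha : a < 1) :
    ∫⁻ s in Set.Ioo 0 t, ENNReal.ofReal s ^ (-a) =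
      ENNReal.ofReal t ^ (1 - a) / ENNReal.ofReal (1 - a) := by
  have ha' : -1 < -a := by linarith
  have hint : IntegrableOn (fun s : ℝ => s ^ (-a)) (Set.Ioo 0 t) :=
    (intervalIntegrable_iff_integrableOn_Ioo_of_le ht.le).1
      (intervalIntegral.intervalIntegrable_rpow' ha')
  have hval : ∫ s in Set.Ioo 0 t, s ^ (-a) = t ^ (1 - a) / (1 - a) := by
    rw [← integral_Ioc_eq_integral_Ioo, ← intervalIntegral.integral_of_le ht.le,
      integral_rpow (Or.inl ha'), Real.zero_rpow (by linarith), sub_zero, neg_add_eq_sub]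
  calc ∫⁻ s in Set.Ioo 0 t, ENNReal.ofReal s ^ (-a)
      = ∫⁻ s in Set.Ioo 0 t, ENNReal.ofReal (s ^ (-a)) :=
        setLIntegral_congr_fun measurableSet_Ioo fun s hs => ENNReal.ofReal_rpow_of_pos hs.1
    _ = ENNReal.ofReal (t ^ (1 - a) / (1 - a)) := by
        rw [← hval, ofReal_integral_eq_lintegral_ofReal hint]
        exact (ae_restrict_iff' measurableSet_Ioo).2
          (Eventually.of_forall fun s hs => Real.rpow_nonneg hs.1.le _)
    _ = ENNReal.ofReal t ^ (1 - a) / ENNReal.ofReal (1 - a) := by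
        rw [ENNReal.ofReal_div_of_pos (sub_pos.2 ha), ENNReal.ofReal_rpow_of_pos ht]

lemma lintegral_mul_rpow_le_rpow_lintegral_mul {X : Type*} [MeasurableSpace X] {μ : Measure X}
    {g φ : X → ℝ≥0∞} (hg : Measurable g) (hφ : Measurable φ) (hg_one : ∫⁻ y, g y ∂μ = 1)
    {b : ℝ} (hb₀ : 0 ≤ b) (hb₁ : b ≤ 1) :
    ∫⁻ y, g y * φ y ^ b ∂μ ≤ (∫⁻ y, g y * φ y ∂μ) ^ b := by
  have hsplit (y : X) : g y * φ y ^ b = g y ^ (1 - b) * (g y * φ y) ^ b := by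
    rw [ENNReal.mul_rpow_of_nonneg _ _ hb₀, ← mul_assoc,
      ← ENNReal.rpow_add_of_nonneg _ _ (sub_nonneg.2 hb₁) hb₀, sub_add_cancel, ENNReal.rpow_one]
  simp_rw [hsplit]
  simpa [hg_one] using ENNReal.lintegral_mul_norm_pow_le (μ := μ) hg.aemeasurable
    (hg.mul hφ).aemeasurable (sub_nonneg.2 hb₁) hb₀ (sub_add_cancel 1 b)

lemma lintegral_setLIntegral_ball {X : Type*} [PseudoMetricSpace X] [SecondCountableTopology X]
    [MeasurableSpace X] [OpensMeasurableSpace X] {μ : Measure X} [SFinite μ] {g : X → ℝ≥0∞}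
    (hg : Measurable g) (R : ℝ) :
    ∫⁻ z, ∫⁻ y in Metric.ball z R, g y ∂μ ∂μ = ∫⁻ y, μ (Metric.ball y R) * g y ∂μ := by
  have hball : MeasurableSet {a : X × X | dist a.2 a.1 < R} :=
    measurableSet_lt (by fun_prop) measurable_const
  calc ∫⁻ z, ∫⁻ y in Metric.ball z R, g y ∂μ ∂μ
      = ∫⁻ z, ∫⁻ y, {a : X × X | dist a.2 a.1 < R}.indicator (fun a => g a.2) (z, y) ∂μ ∂μ := by
        refine lintegral_congr fun z => ?_
        rw [← lintegral_indicator measurableSet_ball]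
        rfl
    _ = ∫⁻ y, ∫⁻ z, {a : X × X | dist a.2 a.1 < R}.indicator (fun a => g a.2) (z, y) ∂μ ∂μ :=
        lintegral_lintegral_swap ((hg.comp measurable_snd).indicator hball).aemeasurable
    _ = ∫⁻ y, ∫⁻ z, (Metric.ball y R).indicator (fun _ => g y) z ∂μ ∂μ := by
        refine lintegral_congr fun y => lintegral_congr fun z => ?_
        classical
        simp only [Set.indicator_apply, Metric.mem_ball, dist_comm z y]
        rfl
    _ = ∫⁻ y, μ (Metric.ball y R) * g y ∂μ := by
        simp only [lintegral_indicator_const measurableSet_ball, mul_comm]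

lemma norm_sq_div_add_norm_sq_div {E : Type*} [NormedAddCommGroup E] [InnerProductSpace ℝ E]
    {t s : ℝ} (ht : 0 < t) (hs : 0 < s) (x y z : E) :
    ‖x - z‖ ^ 2 / t + ‖z - y‖ ^ 2 / s =
      ‖x - y‖ ^ 2 / (t + s) +
        ‖z - ((s / (t + s)) • x + (t / (t + s)) • y)‖ ^ 2 / (t * s / (t + s)) := by
  have hts : t + s ≠ 0 := (add_pos ht hs).ne'
  have hcentre : z - ((s / (t + s)) • x + (t / (t + s)) • y) =
      (t / (t + s)) • (z - y) - (s / (t + s)) • (x - z) := by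
    match_scalars <;> field_simp
    ring
  rw [hcentre, ← sub_add_sub_cancel x z y, norm_add_sq_real,
    norm_sub_sq_real ((t / (t + s)) • (z - y)), norm_smul, norm_smul, inner_smul_left,
    inner_smul_right, real_inner_comm (x - z) (z - y)]
  simp only [Real.norm_eq_abs, mul_pow, sq_abs, RCLike.conj_to_real]
  field_simp
  ring

end Preliminaries

section HeatKernel

variable {E : Type*} [NormedAddCommGroup E]

/-- The Gauss–Weierstrass kernel `(4πt)^{-dim E/2} exp(-|z|²/(4t))`, with values in `[0,∞]` so
that it can be integrated against arbitrary nonnegative functions. It is meant for `t > 0`. -/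
def heatKernel [NormedSpace ℝ E] (t : ℝ) (z : E) : ℝ≥0∞ :=
  ENNReal.ofReal ((4 * Real.pi * t) ^ (-(Module.finrank ℝ E : ℝ) / 2) *
    Real.exp (-‖z‖ ^ 2 / (4 * t)))

@[fun_prop]
lemma measurable_heatKernel [NormedSpace ℝ E] [MeasurableSpace E] [OpensMeasurableSpace E]
    {X : Type*} [MeasurableSpace X] {τ : X → ℝ} {ζ : X → E} (hτ : Measurable τ)
    (hζ : Measurable ζ) : Measurable fun a => heatKernel (τ a) (ζ a) := by
  unfold heatKernel
  fun_prop

lemma heatKernel_sub_le_of_norm_sq_le [NormedSpace ℝ E] {t : ℝ} (ht : 0 < t) {y z : E}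
    (hyz : ‖y - z‖ ^ 2 ≤ t) (x : E) :
    heatKernel t (x - y) ≤
      ENNReal.ofReal (Real.exp (1 / 4) * 2 ^ ((Module.finrank ℝ E : ℝ) / 2)) *
        heatKernel (2 * t) (x - z) := by
  unfold heatKernel
  set d : ℝ := (Module.finrank ℝ E : ℝ)
  rw [← ENNReal.ofReal_mul (by positivity)]
  apply ENNReal.ofReal_le_ofReal
  have hscale : (4 * Real.pi * t) ^ (-d / 2) =
      2 ^ (d / 2) * (4 * Real.pi * (2 * t)) ^ (-d / 2) := by
    rw [mul_left_comm _ 2 t, Real.mul_rpow zero_le_two (by positivity), ← mul_assoc,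
      ← Real.rpow_add two_pos, ← add_div, add_neg_cancel, zero_div, Real.rpow_zero, one_mul]
  have hnorm : ‖x - z‖ ^ 2 ≤ 2 * ‖x - y‖ ^ 2 + 2 * t := by
    have htri : ‖x - z‖ ≤ ‖x - y‖ + ‖y - z‖ := norm_sub_le_norm_sub_add_norm_sub x y z
    nlinarith [norm_nonneg (x - z), sq_nonneg (‖x - y‖ - ‖y - z‖)]
  have hexp : -‖x - y‖ ^ 2 / (4 * t) ≤ 1 / 4 + -‖x - z‖ ^ 2 / (4 * (2 * t)) := by
    field_simp
    linarith
  calc (4 * Real.pi * t) ^ (-d / 2) * Real.exp (-‖x - y‖ ^ 2 / (4 * t))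
      ≤ 2 ^ (d / 2) * (4 * Real.pi * (2 * t)) ^ (-d / 2) *
          Real.exp (1 / 4 + -‖x - z‖ ^ 2 / (4 * (2 * t))) := by
        rw [hscale]; gcongr
    _ = _ := by rw [Real.exp_add]; ring

lemma heatKernel_mul_heatKernel [InnerProductSpace ℝ E] {t s : ℝ} (ht : 0 < t) (hs : 0 < s)
    (x y z : E) :
    heatKernel t (x - z) * heatKernel s (z - y) =
      heatKernel (t + s) (x - y) *
        heatKernel (t * s / (t + s)) (z - ((s / (t + s)) • x + (t / (t + s)) • y)) := by
  unfold heatKernel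
  have hprefactor : 4 * Real.pi * t * (4 * Real.pi * s) =
      4 * Real.pi * (t + s) * (4 * Real.pi * (t * s / (t + s))) := by field_simp
  have hexponent := congrArg (fun a => -(a / 4)) (norm_sq_div_add_norm_sq_div ht hs x y z)
  rw [← ENNReal.ofReal_mul (by positivity), ← ENNReal.ofReal_mul (by positivity),
    mul_mul_mul_comm, mul_mul_mul_comm ((4 * Real.pi * (t + s)) ^ _),
    ← Real.mul_rpow (by positivity) (by positivity),
    ← Real.mul_rpow (by positivity) (by positivity), hprefactor, ← Real.exp_add, ← Real.exp_add]
  congr 3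
  convert hexponent using 1 <;> (field_simp; ring)

end HeatKernel

section HeatFlow

variable {E : Type*} [NormedAddCommGroup E] [InnerProductSpace ℝ E] [FiniteDimensional ℝ E]
  [MeasurableSpace E] [BorelSpace E]

lemma lintegral_heatKernel {t : ℝ} (ht : 0 < t) : ∫⁻ z : E, heatKernel t z = 1 := by
  set d : ℝ := (Module.finrank ℝ E : ℝ) with hd
  have hgauss : ∫ z : E, Real.exp (-‖z‖ ^ 2 / (4 * t)) = (4 * Real.pi * t) ^ (d / 2) := by
    convert GaussianFourier.integral_rexp_neg_mul_sq_norm (V := E) (b := 1 / (4 * t))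
      (by positivity) using 3 <;> field_simp
  have hint : Integrable fun z : E => Real.exp (-‖z‖ ^ 2 / (4 * t)) :=
    .of_integral_ne_zero (by rw [hgauss]; positivity)
  unfold heatKernel
  rw [← ofReal_integral_eq_lintegral_ofReal (hint.const_mul _)
      (Eventually.of_forall fun z => by positivity), integral_const_mul, hgauss, ← hd,
    ← Real.rpow_add (by positivity), ← add_div, neg_add_cancel, zero_div, Real.rpow_zero,
    ENNReal.ofReal_one]

lemma lintegral_heatKernel_sub {t : ℝ} (ht : 0 < t) (x : E) :
    ∫⁻ y, heatKernel t (x - y) = 1 := by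
  rw [lintegral_sub_left_eq_self (fun y => heatKernel t y) x, lintegral_heatKernel ht]

lemma lintegral_heatKernel_mul_heatKernel {t s : ℝ} (ht : 0 < t) (hs : 0 < s) (x y : E) :
    ∫⁻ z, heatKernel t (x - z) * heatKernel s (z - y) = heatKernel (t + s) (x - y) := by
  simp_rw [heatKernel_mul_heatKernel ht hs]
  rw [lintegral_const_mul _ (by fun_prop), lintegral_sub_right_eq_self (heatKernel _),
    lintegral_heatKernel (by positivity), mul_one]

/-- The heat semigroup `S(t)` on `[0,∞]`-valued functions. Unlike the real-input `heatS`, it can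
be composed with itself. -/
def heatFlow (t : ℝ) (φ : E → ℝ≥0∞) (x : E) : ℝ≥0∞ :=
  ∫⁻ y, heatKernel t (x - y) * φ y

lemma measurable_heatFlow {X : Type*} [MeasurableSpace X] {τ : X → ℝ} {φ : X → E → ℝ≥0∞}
    {ξ : X → E} (hτ : Measurable τ) (hφ : Measurable (Function.uncurry φ)) (hξ : Measurable ξ) :
    Measurable fun a => heatFlow (τ a) (φ a) (ξ a) := by
  have hφ' : Measurable fun a : X × E => φ a.1 a.2 := hφ
  exact Measurable.lintegral_prod_right'
    (f := fun a : X × E => heatKernel (τ a.1) (ξ a.1 - a.2) * φ a.1 a.2) (by fun_prop)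

lemma measurable_heatFlow_right {φ : E → ℝ≥0∞} (hφ : Measurable φ) (t : ℝ) :
    Measurable (heatFlow t φ) :=
  measurable_heatFlow measurable_const (hφ.comp measurable_snd) measurable_id

lemma heatFlow_mono {φ ψ : E → ℝ≥0∞} (h : ∀ y, φ y ≤ ψ y) (t : ℝ) (x : E) :
    heatFlow t φ x ≤ heatFlow t ψ x :=
  lintegral_mono fun y => mul_le_mul_right (h y) _

lemma heatFlow_const_mul {φ : E → ℝ≥0∞} (hφ : Measurable φ) (c : ℝ≥0∞) (t : ℝ) (x : E) :
    heatFlow t (fun y => c * φ y) x = c * heatFlow t φ x := by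
  unfold heatFlow
  rw [← lintegral_const_mul _ (by fun_prop)]
  exact lintegral_congr fun y => mul_left_comm _ _ _

lemma heatFlow_const_add {t : ℝ} (ht : 0 < t) (c : ℝ≥0∞) (φ : E → ℝ≥0∞) (x : E) :
    heatFlow t (fun y => c + φ y) x = c + heatFlow t φ x := by
  simp only [heatFlow, mul_add]
  rw [lintegral_add_left (by fun_prop), lintegral_mul_const _ (by fun_prop),
    lintegral_heatKernel_sub ht, one_mul]

lemma heatFlow_iSup {φ : ℕ → E → ℝ≥0∞} (hφ : ∀ n, Measurable (φ n)) (hmono : Monotone φ)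
    (t : ℝ) (x : E) : heatFlow t (fun y => ⨆ n, φ n y) x = ⨆ n, heatFlow t (φ n) x := by
  simp only [heatFlow, ENNReal.mul_iSup]
  exact lintegral_iSup (f := fun n y => heatKernel t (x - y) * φ n y)
    (fun n => by have := hφ n; fun_prop) fun m n hmn y => mul_le_mul_right (hmono hmn y) _

lemma heatFlow_rpow_le {t : ℝ} (ht : 0 < t) {φ : E → ℝ≥0∞} (hφ : Measurable φ) {b : ℝ}
    (hb₀ : 0 ≤ b) (hb₁ : b ≤ 1) (x : E) :
    heatFlow t (fun y => φ y ^ b) x ≤ heatFlow t φ x ^ b :=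
  lintegral_mul_rpow_le_rpow_lintegral_mul (by fun_prop) hφ (lintegral_heatKernel_sub ht x)
    hb₀ hb₁

lemma heatFlow_heatFlow {t s : ℝ} (ht : 0 < t) (hs : 0 < s) {φ : E → ℝ≥0∞} (hφ : Measurable φ)
    (x : E) : heatFlow t (heatFlow s φ) x = heatFlow (t + s) φ x := by
  calc heatFlow t (heatFlow s φ) x
      = ∫⁻ z, ∫⁻ y, heatKernel t (x - z) * (heatKernel s (z - y) * φ y) :=
        lintegral_congr fun z => (lintegral_const_mul _ (by fun_prop)).symm
    _ = ∫⁻ y, ∫⁻ z, heatKernel t (x - z) * (heatKernel s (z - y) * φ y) := by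
        refine lintegral_lintegral_swap (Measurable.aemeasurable ?_)
        simp only [Function.uncurry_def]
        fun_prop
    _ = ∫⁻ y, heatKernel (t + s) (x - y) * φ y := by
        refine lintegral_congr fun y => ?_
        simp_rw [← mul_assoc]
        rw [lintegral_mul_const _ (by fun_prop), lintegral_heatKernel_mul_heatKernel ht hs]

lemma measure_ball_mul_heatFlow_le {t : ℝ} (ht : 0 < t) {W : E → ℝ≥0∞} (hW : Measurable W)
    {A : ℝ≥0∞} (hA : ∀ z, ∫⁻ y in Metric.ball z (√t), W y ≤ A) (x : E) :
    volume (Metric.ball (0 : E) (√t)) * heatFlow t W x ≤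
      ENNReal.ofReal (Real.exp (1 / 4) * 2 ^ ((Module.finrank ℝ E : ℝ) / 2)) * A := by
  set c := ENNReal.ofReal (Real.exp (1 / 4) * 2 ^ ((Module.finrank ℝ E : ℝ) / 2))
  have hlocal (z : E) : ∫⁻ y in Metric.ball z (√t), heatKernel t (x - y) * W y ≤
      c * A * heatKernel (2 * t) (x - z) :=
    calc ∫⁻ y in Metric.ball z (√t), heatKernel t (x - y) * W y
        ≤ ∫⁻ y in Metric.ball z (√t), c * heatKernel (2 * t) (x - z) * W y := by
          refine setLIntegral_mono' measurableSet_ball fun y hy => ?_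
          gcongr
          refine heatKernel_sub_le_of_norm_sq_le ht ?_ x
          rw [Metric.mem_ball, dist_eq_norm] at hy
          exact (Real.le_sqrt (norm_nonneg _) ht.le).1 hy.le
      _ = c * heatKernel (2 * t) (x - z) * ∫⁻ y in Metric.ball z (√t), W y :=
          lintegral_const_mul _ hW
      _ ≤ c * heatKernel (2 * t) (x - z) * A := by gcongr; exact hA z
      _ = c * A * heatKernel (2 * t) (x - z) := mul_right_comm _ _ _
  calc volume (Metric.ball (0 : E) (√t)) * heatFlow t W x
      = ∫⁻ y, volume (Metric.ball y (√t)) * (heatKernel t (x - y) * W y) := by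
        simp only [Measure.addHaar_ball_center volume _ (√t)]
        exact (lintegral_const_mul _ (by fun_prop)).symm
    _ = ∫⁻ z, ∫⁻ y in Metric.ball z (√t), heatKernel t (x - y) * W y :=
        (lintegral_setLIntegral_ball (by fun_prop) _).symm
    _ ≤ ∫⁻ z, c * A * heatKernel (2 * t) (x - z) := lintegral_mono hlocal
    _ = c * A := by
        rw [lintegral_const_mul _ (by fun_prop), lintegral_heatKernel_sub (by positivity), mul_one]

variable (E) in
lemma exists_heatFlow_le_mul_rpow : ∃ C₀ : ℝ, 0 < C₀ ∧ ∀ W : E → ℝ≥0∞, Measurable W →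
    ∀ (A : ℝ≥0∞) (t : ℝ), 0 < t → (∀ z, ∫⁻ y in Metric.ball z (√t), W y ≤ A) →
      ∀ x, heatFlow t W x ≤ ENNReal.ofReal (C₀ * t ^ (-(Module.finrank ℝ E : ℝ) / 2)) * A := by
  set d : ℝ := (Module.finrank ℝ E : ℝ)
  set c : ℝ := Real.exp (1 / 4) * 2 ^ (d / 2)
  set β : ℝ := volume.real (Metric.ball (0 : E) 1)
  have hβ : 0 < β := ENNReal.toReal_pos (Metric.measure_ball_pos volume _ one_pos).ne'
    measure_ball_lt_top.ne
  refine ⟨c / β, by positivity, fun W hW A t ht hA x => ?_⟩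
  have hvol : volume (Metric.ball (0 : E) (√t)) = ENNReal.ofReal (t ^ (d / 2) * β) := by
    rw [Measure.addHaar_ball_of_pos _ _ (Real.sqrt_pos.2 ht), ENNReal.ofReal_mul (by positivity),
      ofReal_measureReal measure_ball_lt_top.ne, Real.sqrt_eq_rpow, ← Real.rpow_mul_natCast ht.le,
      one_div_mul_eq_div]
  have hvol_pos : 0 < t ^ (d / 2) * β := by positivity
  calc heatFlow t W x
      ≤ ENNReal.ofReal c * A / ENNReal.ofReal (t ^ (d / 2) * β) := by
        rw [ENNReal.le_div_iff_mul_le (.inl (ENNReal.ofReal_pos.2 hvol_pos).ne')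
          (.inl ENNReal.ofReal_ne_top), mul_comm, ← hvol]
        exact measure_ball_mul_heatFlow_le ht hW hA x
    _ = ENNReal.ofReal (c / β * t ^ (-d / 2)) * A := by
        rw [div_eq_mul_inv, mul_right_comm, ← div_eq_mul_inv, ← ENNReal.ofReal_div_of_pos hvol_pos,
          neg_div, Real.rpow_neg ht.le]
        congr 2
        field_simp

end HeatFlow

section Duhamel

variable {E : Type*} [NormedAddCommGroup E] [InnerProductSpace ℝ E] [FiniteDimensional ℝ E]
  [MeasurableSpace E] [BorelSpace E]

/-- The right-hand side of Duhamel's formula for `∂ₜu = Δu + F`, `u(·,0) = φ`. -/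
def duhamel (φ : E → ℝ≥0∞) (F : E → ℝ → ℝ≥0∞) (x : E) (t : ℝ) : ℝ≥0∞ :=
  heatFlow t φ x + ∫⁻ s in Set.Ioo 0 t, heatFlow (t - s) (fun y => F y s) x

lemma measurable_heatFlow_sub {X : Type*} [MeasurableSpace X] {F : E → ℝ → ℝ≥0∞}
    (hF : Measurable (Function.uncurry F)) {τ ς : X → ℝ} {ξ : X → E} (hτ : Measurable τ)
    (hς : Measurable ς) (hξ : Measurable ξ) :
    Measurable fun a => heatFlow (τ a - ς a) (fun y => F y (ς a)) (ξ a) :=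
  measurable_heatFlow (hτ.sub hς)
    (hF.comp (measurable_snd.prodMk (hς.comp measurable_fst))) hξ

lemma measurable_duhamel {φ : E → ℝ≥0∞} (hφ : Measurable φ) {F : E → ℝ → ℝ≥0∞}
    (hF : Measurable (Function.uncurry F)) : Measurable (Function.uncurry (duhamel φ F)) := by
  have hwindow : MeasurableSet {b : (E × ℝ) × ℝ | b.2 ∈ Set.Ioo 0 b.1.2} :=
    (measurableSet_lt measurable_const measurable_snd).inter
      (measurableSet_lt measurable_snd (by fun_prop))
  have hsource : Measurable fun a : E × ℝ => ∫⁻ s in Set.Ioo 0 a.2,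
      heatFlow (a.2 - s) (fun y => F y s) a.1 := by
    simp_rw [← lintegral_indicator measurableSet_Ioo]
    exact ((measurable_heatFlow_sub hF (by fun_prop) measurable_snd (by fun_prop)).indicator
      hwindow).lintegral_prod_right' (f := {b : (E × ℝ) × ℝ | b.2 ∈ Set.Ioo 0 b.1.2}.indicator
        fun b => heatFlow (b.1.2 - b.2) (fun y => F y b.2) b.1.1)
  exact (measurable_heatFlow (φ := fun _ => φ) measurable_snd (hφ.comp measurable_snd)
    measurable_fst).add hsource

lemma duhamel_mono {φ : E → ℝ≥0∞} {F G : E → ℝ → ℝ≥0∞} {t : ℝ}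
    (h : ∀ s ∈ Set.Ioo 0 t, ∀ y, F y s ≤ G y s) (x : E) : duhamel φ F x t ≤ duhamel φ G x t :=
  add_le_add_right (setLIntegral_mono' measurableSet_Ioo fun s hs =>
    heatFlow_mono (h s hs) (t - s) x) _

lemma duhamel_iSup {φ : E → ℝ≥0∞} {F : ℕ → E → ℝ → ℝ≥0∞}
    (hF : ∀ n, Measurable (Function.uncurry (F n))) (hmono : Monotone F) (x : E) (t : ℝ) :
    duhamel φ (fun y s => ⨆ n, F n y s) x t = ⨆ n, duhamel φ (F n) x t := by
  have hslice (s : ℝ) : heatFlow (t - s) (fun y => ⨆ n, F n y s) x =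
      ⨆ n, heatFlow (t - s) (fun y => F n y s) x :=
    heatFlow_iSup (fun n => (hF n).comp measurable_prodMk_right)
      (fun m n hmn y => hmono hmn y s) _ x
  simp only [duhamel, hslice]
  rw [lintegral_iSup (f := fun n s => heatFlow (t - s) (fun y => F n y s) x)
      (fun n => measurable_heatFlow_sub (hF n) measurable_const measurable_id measurable_const)
      (fun m n hmn s => heatFlow_mono (fun y => hmono hmn y s) (t - s) x), ENNReal.add_iSup]

/-- The Picard map `(u,v) ↦ (S(t)u₀ + ∫ S(t-s)v(s)^p ds, S(t)v₀ + ∫ S(t-s)u(s)^q ds)` of the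
system (S). Its fixed points are the `[0,∞]`-valued solutions. -/
def duhamelPair (p q : ℝ) (U₀ V₀ : E → ℝ≥0∞) (w : (E → ℝ → ℝ≥0∞) × (E → ℝ → ℝ≥0∞)) :
    (E → ℝ → ℝ≥0∞) × (E → ℝ → ℝ≥0∞) :=
  (duhamel U₀ fun y s => w.2 y s ^ p, duhamel V₀ fun y s => w.1 y s ^ q)

variable {p q : ℝ} {U₀ V₀ : E → ℝ≥0∞}

lemma monotone_duhamelPair (hp : 0 ≤ p) (hq : 0 ≤ q) : Monotone (duhamelPair p q U₀ V₀) :=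
  fun _ _ h => ⟨fun x _ => duhamel_mono (fun s _ y => ENNReal.rpow_le_rpow (h.2 y s) hp) x,
    fun x _ => duhamel_mono (fun s _ y => ENNReal.rpow_le_rpow (h.1 y s) hq) x⟩

lemma duhamelPair_iSup (hp : 0 ≤ p) (hq : 0 ≤ q)
    {w : ℕ → (E → ℝ → ℝ≥0∞) × (E → ℝ → ℝ≥0∞)}
    (hw₁ : ∀ n, Measurable (Function.uncurry (w n).1))
    (hw₂ : ∀ n, Measurable (Function.uncurry (w n).2)) (hmono : Monotone w) :
    duhamelPair p q U₀ V₀ (⨆ n, w n) = ⨆ n, duhamelPair p q U₀ V₀ (w n) := by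
  ext x t
  · simp only [duhamelPair, Prod.fst_iSup, Prod.snd_iSup, iSup_apply, ennreal_iSup_rpow hp]
    exact duhamel_iSup (F := fun n y s => (w n).2 y s ^ p) (fun n => (hw₂ n).pow_const p)
      (fun m n hmn y s => ENNReal.rpow_le_rpow ((hmono hmn).2 y s) hp) x t
  · simp only [duhamelPair, Prod.fst_iSup, Prod.snd_iSup, iSup_apply, ennreal_iSup_rpow hq]
    exact duhamel_iSup (F := fun n y s => (w n).1 y s ^ q) (fun n => (hw₁ n).pow_const q)
      (fun m n hmn y s => ENNReal.rpow_le_rpow ((hmono hmn).1 y s) hq) x t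

lemma measurable_iterate_duhamelPair_bot (hU₀ : Measurable U₀) (hV₀ : Measurable V₀) (n : ℕ) :
    Measurable (Function.uncurry ((duhamelPair p q U₀ V₀)^[n] ⊥).1) ∧
      Measurable (Function.uncurry ((duhamelPair p q U₀ V₀)^[n] ⊥).2) := by
  induction n with
  | zero => exact ⟨measurable_const, measurable_const⟩
  | succ n ih =>
    rw [Function.iterate_succ_apply']
    exact ⟨measurable_duhamel hU₀ (ih.2.pow_const p), measurable_duhamel hV₀ (ih.1.pow_const q)⟩

lemma iterate_duhamelPair_bot_le (hp : 0 ≤ p) (hq : 0 ≤ q) {T : ℝ} {A B : E → ℝ → ℝ≥0∞}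
    (hA : ∀ t ∈ Set.Ioc 0 T, ∀ x, duhamel U₀ (fun y s => B y s ^ p) x t ≤ A x t)
    (hB : ∀ t ∈ Set.Ioc 0 T, ∀ x, duhamel V₀ (fun y s => A y s ^ q) x t ≤ B x t) (n : ℕ) :
    ∀ t ∈ Set.Ioc 0 T, ∀ x, ((duhamelPair p q U₀ V₀)^[n] ⊥).1 x t ≤ A x t ∧
      ((duhamelPair p q U₀ V₀)^[n] ⊥).2 x t ≤ B x t := by
  induction n with
  | zero => exact fun _ _ _ => ⟨bot_le, bot_le⟩
  | succ n ih =>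
    intro t ht x
    have hmem (s : ℝ) (hs : s ∈ Set.Ioo 0 t) : s ∈ Set.Ioc 0 T := ⟨hs.1, hs.2.le.trans ht.2⟩
    rw [Function.iterate_succ_apply']
    exact ⟨(duhamel_mono (fun s hs y =>
        ENNReal.rpow_le_rpow (ih s (hmem s hs) y).2 hp) x).trans (hA t ht x),
      (duhamel_mono (fun s hs y =>
        ENNReal.rpow_le_rpow (ih s (hmem s hs) y).1 hq) x).trans (hB t ht x)⟩

lemma exists_isFixedPt_duhamelPair_le (hp : 0 ≤ p) (hq : 0 ≤ q) (hU₀ : Measurable U₀)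
    (hV₀ : Measurable V₀) {T : ℝ} {A B : E → ℝ → ℝ≥0∞}
    (hA : ∀ t ∈ Set.Ioc 0 T, ∀ x, duhamel U₀ (fun y s => B y s ^ p) x t ≤ A x t)
    (hB : ∀ t ∈ Set.Ioc 0 T, ∀ x, duhamel V₀ (fun y s => A y s ^ q) x t ≤ B x t) :
    ∃ U V : E → ℝ → ℝ≥0∞, Measurable (Function.uncurry U) ∧ Measurable (Function.uncurry V) ∧
      Function.IsFixedPt (duhamelPair p q U₀ V₀) (U, V) ∧
      ∀ t ∈ Set.Ioc 0 T, ∀ x, U x t ≤ A x t ∧ V x t ≤ B x t := by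
  set w := fun n => (duhamelPair p q U₀ V₀)^[n] ⊥ with hw
  have hmeas := measurable_iterate_duhamelPair_bot (p := p) (q := q) hU₀ hV₀
  have hmono : Monotone w :=
    (monotone_duhamelPair hp hq).monotone_iterate_of_le_map bot_le
  have hbound := iterate_duhamelPair_bot_le hp hq hA hB
  have hfix : Function.IsFixedPt (duhamelPair p q U₀ V₀) (⨆ n, w n) := by
    rw [Function.IsFixedPt, duhamelPair_iSup hp hq (fun n => (hmeas n).1) (fun n => (hmeas n).2)
      hmono, ← hmono.iSup_nat_add 1]
    simp only [hw, Function.iterate_succ_apply']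
  refine ⟨(⨆ n, w n).1, (⨆ n, w n).2, ?_, ?_, hfix, fun t ht x => ⟨?_, ?_⟩⟩
  · simpa only [Function.uncurry_def, Prod.fst_iSup, iSup_apply] using
      Measurable.iSup fun n => (hmeas n).1
  · simpa only [Function.uncurry_def, Prod.snd_iSup, iSup_apply] using
      Measurable.iSup fun n => (hmeas n).2
  · simpa only [Prod.fst_iSup, iSup_apply] using iSup_le fun n => (hbound n t ht x).1
  · simpa only [Prod.snd_iSup, iSup_apply] using iSup_le fun n => (hbound n t ht x).2

end Duhamel

section Barrier

variable {E : Type*} [NormedAddCommGroup E] [InnerProductSpace ℝ E] [FiniteDimensional ℝ E]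
  [MeasurableSpace E] [BorelSpace E] {f : E → ℝ≥0∞}

lemma heatFlow_sub_heatFlow_rpow_le (hf : Measurable f) {a b m s t : ℝ} (ha : 0 ≤ a)
    (hb₀ : 0 ≤ b) (hb₁ : b ≤ 1) (hm : 0 ≤ m) {M : ℝ≥0∞} (hs : s ∈ Set.Ioo 0 t)
    (hM : ∀ y, heatFlow s f y ^ m ≤ M) (x : E) :
    heatFlow (t - s) (fun y => heatFlow s f y ^ (m * a + b)) x ≤ M ^ a * heatFlow t f x ^ b := by
  have hFs : Measurable (heatFlow s f) := measurable_heatFlow_right hf s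
  have hts : 0 < t - s := sub_pos.2 hs.2
  calc heatFlow (t - s) (fun y => heatFlow s f y ^ (m * a + b)) x
      ≤ heatFlow (t - s) (fun y => M ^ a * heatFlow s f y ^ b) x := by
        refine heatFlow_mono (fun y => ?_) _ x
        rw [ENNReal.rpow_add_of_nonneg _ _ (by positivity) hb₀, ENNReal.rpow_mul]
        gcongr
        exact hM y
    _ = M ^ a * heatFlow (t - s) (fun y => heatFlow s f y ^ b) x :=
        heatFlow_const_mul (hFs.pow_const b) _ _ x
    _ ≤ M ^ a * heatFlow (t - s) (heatFlow s f) x ^ b := by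
        gcongr
        exact heatFlow_rpow_le hts hFs hb₀ hb₁ x
    _ = M ^ a * heatFlow t f x ^ b := by
        rw [heatFlow_heatFlow hts hs.1 hf, sub_add_cancel]

/- The exponent `α + m` may exceed `1`, so Jensen's inequality does not apply to it directly. Only
the share `m (1 - μ)` of it is spent on the decay in `s`, with `μ > 0` keeping the singularity
integrable and `α + m μ ≤ 1` admissible in Jensen's inequality; `μ` below is the largest such. -/
lemma lintegral_heatFlow_heatFlow_rpow_le (hf : Measurable f) {α m T : ℝ} (hα₀ : 0 ≤ α)
    (hα₁ : α < 1) (hm : 0 < m) {K : ℝ≥0∞}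
    (hdecay : ∀ t ∈ Set.Ioc 0 T, ∀ x, heatFlow t f x ^ m ≤ K / ENNReal.ofReal t) {t : ℝ}
    (ht : t ∈ Set.Ioc 0 T) (x : E) :
    ∫⁻ s in Set.Ioo 0 t, heatFlow (t - s) (fun y => heatFlow s f y ^ (α + m)) x ≤
      K / ENNReal.ofReal (min 1 ((1 - α) / m)) * heatFlow t f x ^ α := by
  set μ : ℝ := min 1 ((1 - α) / m)
  have hμ₀ : 0 < μ := lt_min one_pos (div_pos (sub_pos.2 hα₁) hm)
  have hμ₁ : 0 ≤ 1 - μ := sub_nonneg.2 (min_le_left _ _)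
  have hμm : m * μ + α ≤ 1 := by
    have : μ * m ≤ 1 - α := (le_div_iff₀ hm).1 (min_le_right _ _)
    linarith
  have hsplit : α + m = m * (1 - μ) + (m * μ + α) := by ring
  have hFt : heatFlow t f x ^ (m * μ + α) ≤ (K / ENNReal.ofReal t) ^ μ * heatFlow t f x ^ α := by
    rw [ENNReal.rpow_add_of_nonneg _ _ (by positivity) hα₀, ENNReal.rpow_mul]
    gcongr
    exact hdecay t ht x
  calc ∫⁻ s in Set.Ioo 0 t, heatFlow (t - s) (fun y => heatFlow s f y ^ (α + m)) x
      ≤ ∫⁻ s in Set.Ioo 0 t, ENNReal.ofReal s ^ (-(1 - μ)) *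
          (K ^ (1 - μ) * heatFlow t f x ^ (m * μ + α)) := by
        refine setLIntegral_mono' measurableSet_Ioo fun s hs => ?_
        rw [hsplit, ← mul_assoc, mul_comm (_ ^ _) (K ^ _), ENNReal.rpow_neg, ← div_eq_mul_inv,
          ← ENNReal.div_rpow_of_nonneg _ _ hμ₁]
        exact heatFlow_sub_heatFlow_rpow_le hf hμ₁ (by positivity) hμm hm.le hs
          (hdecay s ⟨hs.1, hs.2.le.trans ht.2⟩) x
    _ = ENNReal.ofReal t ^ μ / ENNReal.ofReal μ *
          (K ^ (1 - μ) * heatFlow t f x ^ (m * μ + α)) := by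
        rw [lintegral_mul_const _ (by fun_prop), lintegral_Ioo_rpow_neg ht.1 (by linarith),
          sub_sub_self]
    _ ≤ ENNReal.ofReal t ^ μ / ENNReal.ofReal μ *
          (K ^ (1 - μ) * ((K / ENNReal.ofReal t) ^ μ * heatFlow t f x ^ α)) := by gcongr
    _ = ENNReal.ofReal t ^ μ * (K / ENNReal.ofReal t) ^ μ * K ^ (1 - μ) / ENNReal.ofReal μ *
          heatFlow t f x ^ α := by simp only [div_eq_mul_inv]; ring
    _ = K / ENNReal.ofReal μ * heatFlow t f x ^ α := by
        rw [rpow_mul_div_rpow_mul_rpow_one_sub hμ₀.le (sub_nonneg.1 hμ₁)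
          (ENNReal.ofReal_pos.2 ht.1).ne' ENNReal.ofReal_ne_top]

/-- The barrier `2 (S(t)f)^α + 1`. For suitable exponents, a pair of such barriers with the same
`f` is a supersolution of the system (S). -/
def heatBarrier (f : E → ℝ≥0∞) (α : ℝ) (x : E) (t : ℝ) : ℝ≥0∞ :=
  2 * heatFlow t f x ^ α + 1

lemma heatBarrier_ne_top {α : ℝ} (hα : 0 ≤ α) {x : E} {t : ℝ} (h : heatFlow t f x ≠ ⊤) :
    heatBarrier f α x t ≠ ⊤ :=
  ENNReal.add_ne_top.2 ⟨ENNReal.mul_ne_top ENNReal.ofNat_ne_top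
    (ENNReal.rpow_ne_top_of_nonneg hα h), ENNReal.one_ne_top⟩

lemma ofReal_toReal_rpow_add_toReal_rpow_le {r₁ r₂ θ t : ℝ} (hr₁ : 0 < r₁)
    (hr₂ : 0 < r₂) (hθ : 0 ≤ θ) {x : E} {a b : ℝ≥0∞} (ha : a ≤ heatBarrier f (θ / r₁) x t)
    (hb : b ≤ heatBarrier f (θ / r₂) x t) :
    ENNReal.ofReal (a.toReal ^ r₁ + b.toReal ^ r₂) ≤
      ENNReal.ofReal (3 ^ r₁ + 3 ^ r₂) * heatFlow t f x ^ θ + ENNReal.ofReal (3 ^ r₁ + 3 ^ r₂) := by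
  have hcomponent {r : ℝ} (hr : 0 < r) {c : ℝ≥0∞} (hc : c ≤ heatBarrier f (θ / r) x t) :
      ENNReal.ofReal (c.toReal ^ r) ≤ ENNReal.ofReal (3 ^ r) * (1 + heatFlow t f x ^ θ) := by
    rw [← ENNReal.ofReal_rpow_of_nonneg ENNReal.toReal_nonneg hr.le,
      ← ENNReal.ofReal_rpow_of_pos three_pos, ENNReal.ofReal_ofNat]
    calc ENNReal.ofReal c.toReal ^ r ≤ heatBarrier f (θ / r) x t ^ r := by
          gcongr
          exact ENNReal.ofReal_toReal_le.trans hc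
      _ ≤ 3 ^ r * (1 + heatFlow t f x ^ θ) :=
          two_mul_rpow_add_one_rpow_le (by positivity) hr.le (div_mul_cancel₀ θ hr.ne').le _
  calc ENNReal.ofReal (a.toReal ^ r₁ + b.toReal ^ r₂)
      = ENNReal.ofReal (a.toReal ^ r₁) + ENNReal.ofReal (b.toReal ^ r₂) :=
        ENNReal.ofReal_add (by positivity) (by positivity)
    _ ≤ ENNReal.ofReal (3 ^ r₁) * (1 + heatFlow t f x ^ θ) +
          ENNReal.ofReal (3 ^ r₂) * (1 + heatFlow t f x ^ θ) :=
        add_le_add (hcomponent hr₁ ha) (hcomponent hr₂ hb)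
    _ = _ := by rw [ENNReal.ofReal_add (by positivity) (by positivity)]; ring

lemma lintegral_heatFlow_heatBarrier_rpow_le (hf : Measurable f) {β b p t : ℝ} (hβ : 0 ≤ β)
    (hp : 0 ≤ p) (hb : β * p ≤ b) (x : E) :
    ∫⁻ s in Set.Ioo 0 t, heatFlow (t - s) (fun y => heatBarrier f β y s ^ p) x ≤
      3 ^ p * (ENNReal.ofReal t +
        ∫⁻ s in Set.Ioo 0 t, heatFlow (t - s) (fun y => heatFlow s f y ^ b) x) := by
  have hF (s : ℝ) : Measurable fun y => heatFlow s f y ^ b :=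
    (measurable_heatFlow_right hf s).pow_const b
  calc ∫⁻ s in Set.Ioo 0 t, heatFlow (t - s) (fun y => heatBarrier f β y s ^ p) x
      ≤ ∫⁻ s in Set.Ioo 0 t,
          3 ^ p * (1 + heatFlow (t - s) (fun y => heatFlow s f y ^ b) x) := by
        refine setLIntegral_mono' measurableSet_Ioo fun s hs => ?_
        rw [← heatFlow_const_add (sub_pos.2 hs.2), ← heatFlow_const_mul (by have := hF s; fun_prop)]
        exact heatFlow_mono (fun y => two_mul_rpow_add_one_rpow_le hβ hp hb _) _ x
    _ = 3 ^ p * (ENNReal.ofReal t +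
          ∫⁻ s in Set.Ioo 0 t, heatFlow (t - s) (fun y => heatFlow s f y ^ b) x) := by
        rw [lintegral_const_mul' _ _ (ENNReal.rpow_ne_top_of_nonneg hp ENNReal.ofNat_ne_top),
          lintegral_add_left measurable_const]
        simp

lemma duhamel_heatBarrier_rpow_le (hf : Measurable f) {α β m p ε T : ℝ} (hα₀ : 0 ≤ α)
    (hα₁ : α < 1) (hβ : 0 ≤ β) (hm : 0 < m) (hp : 0 ≤ p) (hβp : β * p ≤ α + m)
    (hε : 3 ^ p * ε ≤ min 1 ((1 - α) / m)) (hT : T ≤ ε)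
    (hdecay : ∀ t ∈ Set.Ioc 0 T, ∀ x,
      heatFlow t f x ^ m ≤ ENNReal.ofReal ε / ENNReal.ofReal t)
    {U₀ : E → ℝ≥0∞} (hU₀ : ∀ y, U₀ y ≤ f y ^ α) {t : ℝ} (ht : t ∈ Set.Ioc 0 T) (x : E) :
    duhamel U₀ (fun y s => heatBarrier f β y s ^ p) x t ≤ heatBarrier f α x t := by
  set μ : ℝ := min 1 ((1 - α) / m)
  have hε' : 3 ^ p * ENNReal.ofReal ε ≤ ENNReal.ofReal μ := by
    calc (3 : ℝ≥0∞) ^ p * ENNReal.ofReal ε = ENNReal.ofReal (3 ^ p * ε) := by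
          rw [ENNReal.ofReal_mul (by positivity), ← ENNReal.ofReal_rpow_of_pos three_pos,
            ENNReal.ofReal_ofNat]
      _ ≤ ENNReal.ofReal μ := ENNReal.ofReal_le_ofReal hε
  have hinitial : heatFlow t U₀ x ≤ heatFlow t f x ^ α :=
    (heatFlow_mono hU₀ t x).trans (heatFlow_rpow_le ht.1 hf hα₀ hα₁.le x)
  have htime : 3 ^ p * ENNReal.ofReal t ≤ 1 :=
    calc 3 ^ p * ENNReal.ofReal t ≤ 3 ^ p * ENNReal.ofReal ε := by gcongr; exact ht.2.trans hT
      _ ≤ ENNReal.ofReal μ := hε'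
      _ ≤ 1 := ENNReal.ofReal_le_one.2 (min_le_left _ _)
  have hsmall : 3 ^ p * (ENNReal.ofReal ε / ENNReal.ofReal μ) ≤ 1 := by
    rw [← mul_div_assoc]
    exact ENNReal.div_le_of_le_mul (by rwa [one_mul])
  have hsource : ∫⁻ s in Set.Ioo 0 t, heatFlow (t - s) (fun y => heatBarrier f β y s ^ p) x ≤
      1 + heatFlow t f x ^ α :=
    calc _ ≤ 3 ^ p * (ENNReal.ofReal t +
            ENNReal.ofReal ε / ENNReal.ofReal μ * heatFlow t f x ^ α) := by
          refine (lintegral_heatFlow_heatBarrier_rpow_le hf hβ hp hβp x).trans ?_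
          gcongr
          exact lintegral_heatFlow_heatFlow_rpow_le hf hα₀ hα₁ hm hdecay ht x
      _ ≤ 1 + 1 * heatFlow t f x ^ α := by rw [mul_add, ← mul_assoc]; gcongr
      _ = 1 + heatFlow t f x ^ α := by rw [one_mul]
  calc duhamel U₀ (fun y s => heatBarrier f β y s ^ p) x t
      ≤ heatFlow t f x ^ α + (1 + heatFlow t f x ^ α) := add_le_add hinitial hsource
    _ = heatBarrier f α x t := by unfold heatBarrier; ring

lemma exists_isFixedPt_le_heatBarrier {α β m p q : ℝ} (hα₀ : 0 ≤ α) (hα₁ : α < 1) (hβ₀ : 0 ≤ β)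
    (hβ₁ : β < 1) (hm : 0 < m) (hp : 0 ≤ p) (hq : 0 ≤ q) (hβp : β * p ≤ α + m)
    (hαq : α * q ≤ β + m) :
    ∃ ε : ℝ, 0 < ε ∧ ∀ {f U₀ V₀ : E → ℝ≥0∞} {T : ℝ}, Measurable f → Measurable U₀ →
      Measurable V₀ → (∀ y, U₀ y ≤ f y ^ α) → (∀ y, V₀ y ≤ f y ^ β) → T ≤ ε →
      (∀ t ∈ Set.Ioc 0 T, ∀ x, heatFlow t f x ^ m ≤ ENNReal.ofReal ε / ENNReal.ofReal t) →
      ∃ U V : E → ℝ → ℝ≥0∞, Measurable (Function.uncurry U) ∧ Measurable (Function.uncurry V) ∧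
        Function.IsFixedPt (duhamelPair p q U₀ V₀) (U, V) ∧
        ∀ t ∈ Set.Ioc 0 T, ∀ x, U x t ≤ heatBarrier f α x t ∧ V x t ≤ heatBarrier f β x t := by
  have hμ {a : ℝ} (ha : a < 1) : 0 < min 1 ((1 - a) / m) :=
    lt_min one_pos (div_pos (sub_pos.2 ha) hm)
  refine ⟨min (min 1 ((1 - α) / m) / 3 ^ p) (min 1 ((1 - β) / m) / 3 ^ q),
    lt_min (div_pos (hμ hα₁) (by positivity)) (div_pos (hμ hβ₁) (by positivity)),
    fun hf hU₀ hV₀ hU₀f hV₀f hT hdecay => ?_⟩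
  exact exists_isFixedPt_duhamelPair_le hp hq hU₀ hV₀
    (fun t ht x => duhamel_heatBarrier_rpow_le hf hα₀ hα₁ hβ₀ hm hp hβp
      ((le_div_iff₀' (by positivity)).1 (min_le_left _ _)) hT hdecay hU₀f ht x)
    (fun t ht x => duhamel_heatBarrier_rpow_le hf hβ₀ hβ₁ hα₀ hm hq hαq
      ((le_div_iff₀' (by positivity)).1 (min_le_right _ _)) hT hdecay hV₀f ht x)

end Barrier

section Decay

variable {E : Type*} [NormedAddCommGroup E] [InnerProductSpace ℝ E] [FiniteDimensional ℝ E]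
  [MeasurableSpace E] [BorelSpace E]

lemma heatFlow_rpow_inv_rpow_le {t : ℝ} (ht : 0 < t) {W : E → ℝ≥0∞} (hW : Measurable W) {θ : ℝ}
    (hθ : 1 ≤ θ) (x : E) : heatFlow t (fun y => W y ^ θ⁻¹) x ^ θ ≤ heatFlow t W x := by
  have hθ₀ : 0 < θ := one_pos.trans_le hθ
  rw [← ENNReal.le_rpow_inv_iff hθ₀]
  exact heatFlow_rpow_le ht hW (inv_nonneg.2 hθ₀.le) (inv_le_one_of_one_le₀ hθ) x

lemma exists_heatFlow_rpow_inv_rpow_le_div [Nontrivial E] {κ θ ε : ℝ} (hκ₀ : 0 < κ) (hκ₂ : κ ≤ 2)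
    (hθ : 1 ≤ θ) (hε : 0 < ε) :
    ∃ γ : ℝ, 0 < γ ∧ ∀ {W : E → ℝ≥0∞} {ρ : ℝ}, Measurable W → 0 < ρ →
      (∀ z, ∫⁻ y in Metric.ball z ρ, W y ≤
        ENNReal.ofReal (γ * ρ ^ ((Module.finrank ℝ E : ℝ) * (1 - 2 / κ)))) →
      ∀ t ∈ Set.Ioc 0 (ρ ^ 2), ∀ x,
        heatFlow t (fun y => W y ^ θ⁻¹) x ^ (θ * κ / (Module.finrank ℝ E : ℝ)) ≤
          ENNReal.ofReal ε / ENNReal.ofReal t := by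
  set d : ℝ := (Module.finrank ℝ E : ℝ)
  have hd : 0 < d := Nat.cast_pos.2 Module.finrank_pos
  obtain ⟨C₀, hC₀, hsup⟩ := exists_heatFlow_le_mul_rpow E
  refine ⟨ε ^ (d / κ) / C₀, by positivity, fun {W ρ} hW hρ hball t ht x => ?_⟩
  have htρ : √t ≤ ρ := (Real.sqrt_le_left hρ.le).2 ht.2
  have hflow : heatFlow t (fun y => W y ^ θ⁻¹) x ^ θ ≤ ENNReal.ofReal ((ε / t) ^ (d / κ)) :=
    calc heatFlow t (fun y => W y ^ θ⁻¹) x ^ θ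
        ≤ heatFlow t W x := heatFlow_rpow_inv_rpow_le ht.1 hW hθ x
      _ ≤ ENNReal.ofReal (C₀ * t ^ (-d / 2)) *
            ENNReal.ofReal (ε ^ (d / κ) / C₀ * ρ ^ (d * (1 - 2 / κ))) :=
          hsup W hW _ t ht.1
            (fun z => (lintegral_mono_set (Metric.ball_subset_ball htρ)).trans (hball z)) x
      _ = ENNReal.ofReal (ε ^ (d / κ) * (t ^ (-d / 2) * ρ ^ (d * (1 - 2 / κ)))) := by
          have := ht.1
          rw [← ENNReal.ofReal_mul (by positivity)]
          field_simp
      _ ≤ ENNReal.ofReal (ε ^ (d / κ) * t⁻¹ ^ (d / κ)) := by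
          gcongr
          exact rpow_neg_half_mul_rpow_le_inv_rpow hd.le hκ₀ hκ₂ ht.1 htρ
      _ = ENNReal.ofReal ((ε / t) ^ (d / κ)) := by
          rw [div_eq_mul_inv ε, Real.mul_rpow hε.le (inv_nonneg.2 ht.1.le)]
  rw [mul_div_assoc, ENNReal.rpow_mul, ← ENNReal.ofReal_div_of_pos ht.1,
    ← ENNReal.le_rpow_inv_iff (div_pos hκ₀ hd), inv_div,
    ENNReal.ofReal_rpow_of_pos (div_pos hε ht.1)]
  exact hflow

end Decay

section RealValued

variable {N : ℕ}

lemma heatS_eq_heatFlow {t : ℝ} (ht : 0 < t) (φ : Euc N → ℝ) (x : Euc N) :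
    heatS N t φ x = heatFlow t (fun y => ENNReal.ofReal (φ y)) x := by
  unfold heatS heatFlow heatKernel
  refine lintegral_congr fun y => ?_
  rw [ENNReal.ofReal_mul (by positivity), finrank_euclideanSpace_fin]

lemma heatS_rpow_eq_heatFlow {t : ℝ} (ht : 0 < t) {φ : Euc N → ℝ} (hφ : ∀ y, 0 ≤ φ y) {e : ℝ}
    (he : 0 ≤ e) (x : Euc N) :
    heatS N t (fun y => φ y ^ e) x = heatFlow t (fun y => ENNReal.ofReal (φ y) ^ e) x := by
  simp only [heatS_eq_heatFlow ht, ENNReal.ofReal_rpow_of_nonneg (hφ _) he]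

lemma setLIntegral_ball_le_ulocNorm_one {ρ : ℝ} (f : Euc N → ℝ) (z : Euc N) :
    ∫⁻ y in Metric.ball z ρ, ENNReal.ofReal (f y) ≤ ulocNorm N 1 ρ f := by
  simp only [ulocNorm, wnorm, if_neg ENNReal.one_ne_top, if_true]
  exact (lintegral_mono fun y => ENNReal.ofReal_le_ofReal (le_abs_self _)).trans
    (le_iSup (fun x => ∫⁻ y in Metric.ball x ρ, ENNReal.ofReal |f y|) z)

lemma duhamel_rpow_eq_heatS_add {p : ℝ} (hp : 0 ≤ p) (u₀ : Euc N → ℝ) {V : Euc N → ℝ → ℝ≥0∞}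
    {t : ℝ} (ht : 0 < t) (hV : ∀ s ∈ Set.Ioo 0 t, ∀ y, V y s ≠ ⊤) (x : Euc N) :
    duhamel (fun y => ENNReal.ofReal (u₀ y)) (fun y s => V y s ^ p) x t =
      heatS N t u₀ x + ∫⁻ s in Set.Ioo 0 t, heatS N (t - s) (fun y => (V y s).toReal ^ p) x := by
  rw [duhamel, heatS_eq_heatFlow ht]
  congr 1
  refine setLIntegral_congr_fun measurableSet_Ioo fun s hs => ?_
  simp only [heatS_rpow_eq_heatFlow (sub_pos.2 hs.2) (fun _ => ENNReal.toReal_nonneg) hp,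
    ENNReal.ofReal_toReal (hV s hs _)]

lemma duhamelSys_toReal {p q : ℝ} (hp : 0 ≤ p) (hq : 0 ≤ q) {u₀ v₀ : Euc N → ℝ}
    {U V : Euc N → ℝ → ℝ≥0∞} (hUV : Function.IsFixedPt (duhamelPair p q
      (fun y => ENNReal.ofReal (u₀ y)) fun y => ENNReal.ofReal (v₀ y)) (U, V))
    {t : ℝ} (ht : 0 < t) (hfin : ∀ s ∈ Set.Ioc 0 t, ∀ y, U y s ≠ ⊤ ∧ V y s ≠ ⊤) :
    DuhamelSys N p q u₀ v₀ (fun x t => (U x t).toReal) (fun x t => (V x t).toReal) t := by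
  have hIoo (s : ℝ) (hs : s ∈ Set.Ioo 0 t) : s ∈ Set.Ioc 0 t := Set.Ioo_subset_Ioc_self hs
  have htt : t ∈ Set.Ioc 0 t := ⟨ht, le_rfl⟩
  refine ⟨Eventually.of_forall fun x => ?_, Eventually.of_forall fun x => ?_⟩
  · rw [ENNReal.ofReal_toReal (hfin t htt x).1,
      ← duhamel_rpow_eq_heatS_add hp u₀ ht fun s hs y => (hfin s (hIoo s hs) y).2]
    exact congrFun₂ (congrArg Prod.fst hUV).symm x t
  · rw [ENNReal.ofReal_toReal (hfin t htt x).2,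
      ← duhamel_rpow_eq_heatS_add hq v₀ ht fun s hs y => (hfin s (hIoo s hs) y).1]
    exact congrFun₂ (congrArg Prod.snd hUV).symm x t

lemma exists_heatS_rpow_inv_rpow_le_div [Nonempty (Fin N)] {κ θ ε : ℝ} (hκ₀ : 0 < κ) (hκ₂ : κ ≤ 2)
    (hθ : 1 ≤ θ) (hε : 0 < ε) :
    ∃ γ : ℝ, 0 < γ ∧ ∀ {W : Euc N → ℝ} {ρ : ℝ}, Measurable W → (∀ x, 0 ≤ W x) → 0 < ρ →
      ulocNorm N 1 ρ W ≤ ENNReal.ofReal (γ * ρ ^ ((N : ℝ) * (1 - 2 / κ))) →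
      ∀ t ∈ Set.Ioc 0 (ρ ^ 2), ∀ x, heatS N t (fun y => W y ^ θ⁻¹) x ^ (θ * κ / N) ≤
        ENNReal.ofReal ε / ENNReal.ofReal t := by
  obtain ⟨γ, hγ, hdecay⟩ := exists_heatFlow_rpow_inv_rpow_le_div (E := Euc N) hκ₀ hκ₂ hθ hε
  rw [finrank_euclideanSpace_fin] at hdecay
  refine ⟨γ, hγ, fun hW hW_nonneg hρ hball t ht x => ?_⟩
  rw [heatS_rpow_eq_heatFlow ht.1 hW_nonneg (by positivity)]
  exact hdecay hW.ennreal_ofReal hρ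
    (fun z => (setLIntegral_ball_le_ulocNorm_one _ z).trans hball) t ht x

lemma exists_duhamelSys_of_heatS_rpow_le_div {p q r₁ r₂ θ m : ℝ} (hp : 0 ≤ p) (hq : 0 ≤ q)
    (hθ : 0 < θ) (hθr₁ : θ < r₁) (hθr₂ : θ < r₂) (hm : 0 < m) (hpm : θ / r₂ * p ≤ θ / r₁ + m)
    (hqm : θ / r₁ * q ≤ θ / r₂ + m) :
    ∃ ε : ℝ, 0 < ε ∧ ∀ {u₀ v₀ : Euc N → ℝ} {T : ℝ}, Measurable u₀ → Measurable v₀ →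
      (∀ x, 0 ≤ u₀ x) → (∀ x, 0 ≤ v₀ x) → T ≤ ε →
      (∀ t ∈ Set.Ioc 0 T, ∀ x, heatS N t (fun y => (u₀ y ^ r₁ + v₀ y ^ r₂) ^ θ⁻¹) x ^ m ≤
        ENNReal.ofReal ε / ENNReal.ofReal t) →
      ∃ u v : Euc N → ℝ → ℝ, (∀ x t, 0 ≤ u x t) ∧ (∀ x t, 0 ≤ v x t) ∧
        Measurable (Function.uncurry u) ∧ Measurable (Function.uncurry v) ∧
        ∀ t ∈ Set.Ioc 0 T, DuhamelSys N p q u₀ v₀ u v t ∧ ∀ x,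
          ENNReal.ofReal (u x t ^ r₁ + v x t ^ r₂) ≤
            ENNReal.ofReal (3 ^ r₁ + 3 ^ r₂) *
              heatS N t (fun y => (u₀ y ^ r₁ + v₀ y ^ r₂) ^ θ⁻¹) x ^ θ +
            ENNReal.ofReal (3 ^ r₁ + 3 ^ r₂) := by
  have hr₁ : 0 < r₁ := hθ.trans hθr₁
  have hr₂ : 0 < r₂ := hθ.trans hθr₂
  obtain ⟨ε, hε, hfixed⟩ := exists_isFixedPt_le_heatBarrier (E := Euc N)
    (div_pos hθ hr₁).le ((div_lt_one hr₁).2 hθr₁) (div_pos hθ hr₂).le ((div_lt_one hr₂).2 hθr₂)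
    hm hp hq hpm hqm
  refine ⟨ε, hε, fun {u₀ v₀ T} hu₀ hv₀ hu₀_nonneg hv₀_nonneg hT hdecay => ?_⟩
  have hu₀_rpow (x) : 0 ≤ u₀ x ^ r₁ := Real.rpow_nonneg (hu₀_nonneg x) r₁
  have hv₀_rpow (x) : 0 ≤ v₀ x ^ r₂ := Real.rpow_nonneg (hv₀_nonneg x) r₂
  set f : Euc N → ℝ≥0∞ := fun y => ENNReal.ofReal (u₀ y ^ r₁ + v₀ y ^ r₂) ^ θ⁻¹
  have hflow (t) (ht : t ∈ Set.Ioc 0 T) (x : Euc N) :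
      heatS N t (fun y => (u₀ y ^ r₁ + v₀ y ^ r₂) ^ θ⁻¹) x = heatFlow t f x :=
    heatS_rpow_eq_heatFlow ht.1 (fun y => add_nonneg (hu₀_rpow y) (hv₀_rpow y)) (by positivity) x
  obtain ⟨U, V, hU, hV, hUV, hle⟩ := hfixed (f := f) (by fun_prop)
    hu₀.ennreal_ofReal hv₀.ennreal_ofReal
    (fun y => ofReal_le_ofReal_rpow_inv_rpow_div (hu₀_nonneg y) hr₁ hθ.ne'
      (le_add_of_nonneg_right (hv₀_rpow y)))
    (fun y => ofReal_le_ofReal_rpow_inv_rpow_div (hv₀_nonneg y) hr₂ hθ.ne'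
      (le_add_of_nonneg_left (hu₀_rpow y))) hT fun t ht x => hflow t ht x ▸ hdecay t ht x
  have hflow_fin (t) (ht : t ∈ Set.Ioc 0 T) (x : Euc N) : heatFlow t f x ≠ ⊤ :=
    hflow t ht x ▸ ((ENNReal.rpow_lt_top_iff_of_pos hm).1 ((hdecay t ht x).trans_lt
      (ENNReal.div_lt_top ENNReal.ofReal_ne_top (ENNReal.ofReal_pos.2 ht.1).ne'))).ne
  have hfin (t) (ht : t ∈ Set.Ioc 0 T) (x : Euc N) : U x t ≠ ⊤ ∧ V x t ≠ ⊤ :=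
    ⟨ne_top_of_le_ne_top (heatBarrier_ne_top (by positivity) (hflow_fin t ht x)) (hle t ht x).1,
      ne_top_of_le_ne_top (heatBarrier_ne_top (by positivity) (hflow_fin t ht x)) (hle t ht x).2⟩
  refine ⟨fun x t => (U x t).toReal, fun x t => (V x t).toReal, fun _ _ => ENNReal.toReal_nonneg,
    fun _ _ => ENNReal.toReal_nonneg, hU.ennreal_toReal, hV.ennreal_toReal, fun t ht =>
      ⟨duhamelSys_toReal hp hq hUV ht.1 fun s hs y => hfin s ⟨hs.1, hs.2.trans ht.2⟩ y,
        fun x => ?_⟩⟩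
  rw [hflow t ht x]
  exact ofReal_toReal_rpow_add_toReal_rpow_le hr₁ hr₂ hθ.le (hle t ht x).1 (hle t ht x).2

end RealValued

/-- Theorem 3.1 (ii), first part: if `0 < max{P,Q} ≤ 2` and
`1 < r ≤ min{r₁,r₂}`, there is `σ* > 1` such that for every `σ ∈ (1,σ*]` there are
`γ₁, T₁, C > 0` such that `|||W₀|||_{1,ρ} ≤ γ₁ ρ^{N(1-2/max{P,Q})}` for some `ρ > 0` implies
the existence of a solution of (S) on `ℝ^N × (0, min{ρ²,T₁}]` with
`0 ≤ u^{r₁} + v^{r₂} ≤ C [S(t)W₀^{σ/r}]^{r/σ} + C`. -/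
theorem statement8 (N : ℕ) (hN : 1 ≤ N) (p q r₁ r₂ : ℝ) (hp : 0 ≤ p) (hq : 0 ≤ q)
    (hr₁ : 1 ≤ r₁) (hr₂ : 1 ≤ r₂) (P Q : ℝ)
    (hP : P = (N : ℝ) * (p / r₂ - 1 / r₁)) (hQ : Q = (N : ℝ) * (q / r₁ - 1 / r₂))
    (hPQpos : 0 < max P Q) (hPQ2 : max P Q ≤ 2)
    (r : ℝ) (hr : 1 < r) (hrm : r ≤ min r₁ r₂) :
    ∃ σstar : ℝ, 1 < σstar ∧
      ∀ σ : ℝ, 1 < σ → σ ≤ σstar →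
        ∃ γ₁ T₁ C : ℝ, 0 < γ₁ ∧ 0 < T₁ ∧ 0 < C ∧
          ∀ u₀ v₀ : Euc N → ℝ, Measurable u₀ → Measurable v₀ →
            (∀ x, 0 ≤ u₀ x) → (∀ x, 0 ≤ v₀ x) →
            ulocNorm N (ENNReal.ofReal r₁) 1 u₀ < ⊤ →
            ulocNorm N (ENNReal.ofReal r₂) 1 v₀ < ⊤ →
            ∀ ρ : ℝ, 0 < ρ →
              ulocNorm N 1 ρ (fun x => u₀ x ^ r₁ + v₀ x ^ r₂) ≤
                ENNReal.ofReal (γ₁ * ρ ^ ((N : ℝ) * (1 - 2 / max P Q))) →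
              ∃ u v : Euc N → ℝ → ℝ,
                (∀ x t, 0 ≤ u x t) ∧ (∀ x t, 0 ≤ v x t) ∧
                Measurable (Function.uncurry u) ∧ Measurable (Function.uncurry v) ∧
                ∀ t : ℝ, 0 < t → t ≤ min (ρ ^ 2) T₁ →
                  DuhamelSys N p q u₀ v₀ u v t ∧
                  ∀ᵐ x ∂(volume : Measure (Euc N)),
                    ENNReal.ofReal (u x t ^ r₁ + v x t ^ r₂) ≤
                      ENNReal.ofReal C *
                        heatS N t (fun y => (u₀ y ^ r₁ + v₀ y ^ r₂) ^ (σ / r)) x ^ (r / σ) +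
                      ENNReal.ofReal C := by
  obtain ⟨hrr₁, hrr₂⟩ := le_min_iff.1 hrm
  have hN₀ : (0 : ℝ) < N := Nat.cast_pos.2 hN
  have : Nonempty (Fin N) := Fin.pos_iff_nonempty.1 hN
  refine ⟨r, hr, fun σ hσ hσr => ?_⟩
  rw [← inv_div r σ]
  have hθ_one : 1 ≤ r / σ := (one_le_div (one_pos.trans hσ)).2 hσr
  have hθr : r / σ < r := div_lt_self (one_pos.trans hr) hσ
  generalize r / σ = θ at *
  obtain ⟨ε, hε, hsolution⟩ := exists_duhamelSys_of_heatS_rpow_le_div (N := N) hp hq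
    (one_pos.trans_le hθ_one) (hθr.trans_le hrr₁) (hθr.trans_le hrr₂)
    (m := θ * max P Q / N) (by positivity)
    (div_mul_le_div_add_mul_div hN₀ (by positivity) (hP ▸ le_max_left P Q))
    (div_mul_le_div_add_mul_div hN₀ (by positivity) (hQ ▸ le_max_right P Q))
  obtain ⟨γ, hγ, hdecay⟩ := exists_heatS_rpow_inv_rpow_le_div (N := N) hPQpos hPQ2 hθ_one hε
  refine ⟨γ, ε, 3 ^ r₁ + 3 ^ r₂, hγ, hε, by positivity, ?_⟩
  intro u₀ v₀ hu₀ hv₀ hu₀_nonneg hv₀_nonneg _ _ ρ hρ hW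
  have hW_nonneg (x) : 0 ≤ u₀ x ^ r₁ + v₀ x ^ r₂ :=
    add_nonneg (Real.rpow_nonneg (hu₀_nonneg x) _) (Real.rpow_nonneg (hv₀_nonneg x) _)
  obtain ⟨u, v, hu, hv, hu_meas, hv_meas, huv⟩ := hsolution hu₀ hv₀ hu₀_nonneg hv₀_nonneg
    (min_le_right (ρ ^ 2) ε) fun t ht =>
      hdecay (by fun_prop) hW_nonneg hρ hW t ⟨ht.1, ht.2.trans (min_le_left _ _)⟩
  exact ⟨u, v, hu, hv, hu_meas, hv_meas, fun t ht htT =>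
    ⟨(huv t ⟨ht, htT⟩).1, Eventually.of_forall (huv t ⟨ht, htT⟩).2⟩⟩
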